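/- Let (L, I) be an integral system on a set X. If a function f : X → [0,∞] is the pointwise sum f = Σ_{n=1}^∞ f_n of functions f_n : X → [0,∞], then Ī(f) ≤ Σ_{n=1}^∞ Ī(f_n), where Ī denotes the upper integral associated with (L, I). -/

import Mathlib

open Filter Topology

/-- An integral system on a set `X`: a linear lattice `L` of real-valued functions on `X`
(a vector subspace of `ℝ^X` closed under pointwise max and min) together with a
preintegral `I` on it (a positive linear functional that is continuous in the sense that
`I fₙ → 0` whenever `fₙ ∈ L` are nonnegative and decrease pointwise to `0`). -/
structure IntegralSystem (X : Type*) where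
  L : Set (X → ℝ)
  I : (X → ℝ) → ℝ
  zero_mem : (0 : X → ℝ) ∈ L
  add_mem : ∀ ⦃f g : X → ℝ⦄, f ∈ L → g ∈ L → f + g ∈ L
  smul_mem : ∀ (c : ℝ) ⦃f : X → ℝ⦄, f ∈ L → c • f ∈ L
  sup_mem : ∀ ⦃f g : X → ℝ⦄, f ∈ L → g ∈ L → f ⊔ g ∈ L
  inf_mem : ∀ ⦃f g : X → ℝ⦄, f ∈ L → g ∈ L → f ⊓ g ∈ L
  I_add : ∀ ⦃f g : X → ℝ⦄, f ∈ L → g ∈ L → I (f + g) = I f + I g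
  I_smul : ∀ (c : ℝ) ⦃f : X → ℝ⦄, f ∈ L → I (c • f) = c * I f
  I_pos : ∀ ⦃f : X → ℝ⦄, f ∈ L → (∀ x, 0 ≤ f x) → 0 ≤ I f
  I_cont : ∀ f : ℕ → X → ℝ, (∀ n, f n ∈ L) → (∀ n x, 0 ≤ f n x) →
    (∀ n x, f (n + 1) x ≤ f n x) →
    (∀ x, Tendsto (fun n => f n x) atTop (𝓝 0)) →
    Tendsto (fun n => I (f n)) atTop (𝓝 0)

variable {X : Type*}

/-- `f : X → (−∞,∞]` belongs to `L_↑` iff some sequence in `L` increases pointwise to `f`. -/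
def MemLup (S : IntegralSystem X) (f : X → EReal) : Prop :=
  ∃ g : ℕ → X → ℝ, (∀ n, g n ∈ S.L) ∧ (∀ n x, g n x ≤ g (n + 1) x) ∧
    ∀ x, Tendsto (fun n => ((g n x : EReal))) atTop (𝓝 (f x))

/-- For `f ∈ L_↑`, `I_↑ f = lim I (g n)` for any sequence `(g n)` in `L` increasing
pointwise to `f`; the value does not depend on the chosen sequence, so we may define it as
the supremum of all such limits. -/
noncomputable def Iup (S : IntegralSystem X) (f : X → EReal) : EReal :=
  sSup { c : EReal | ∃ g : ℕ → X → ℝ, (∀ n, g n ∈ S.L) ∧ (∀ n x, g n x ≤ g (n + 1) x) ∧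
    (∀ x, Tendsto (fun n => ((g n x : EReal))) atTop (𝓝 (f x))) ∧
    Tendsto (fun n => ((S.I (g n) : EReal))) atTop (𝓝 c) }

/-- `L_↓ = −L_↑`. -/
def MemLdown (S : IntegralSystem X) (f : X → EReal) : Prop :=
  MemLup S (fun x => -(f x))

/-- `I_↓ f = −I_↑(−f)`. -/
noncomputable def Idown (S : IntegralSystem X) (f : X → EReal) : EReal :=
  -(Iup S (fun x => -(f x)))

/-- The upper integral `Ī f = inf { I_↑ g : g ∈ L_↑, f ≤ g }` (with `inf ∅ = ∞`). -/
noncomputable def upperInt (S : IntegralSystem X) (f : X → EReal) : EReal :=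
  sInf (Iup S '' { g | MemLup S g ∧ ∀ x, f x ≤ g x })

/-- The lower integral `I̲ f = sup { I_↓ g : g ∈ L_↓, g ≤ f }` (with `sup ∅ = −∞`). -/
noncomputable def lowerInt (S : IntegralSystem X) (f : X → EReal) : EReal :=
  sSup (Idown S '' { g | MemLdown S g ∧ ∀ x, g x ≤ f x })

/-- `f : X → ℝ` is `I`-integrable iff its lower and upper integrals coincide and are finite. -/
def Integrable1 (S : IntegralSystem X) (f : X → ℝ) : Prop :=
  ∃ c : ℝ, lowerInt S (fun x => ((f x : EReal))) = (c : EReal) ∧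
    upperInt S (fun x => ((f x : EReal))) = (c : EReal)

/-- The Daniell extension `I¹` of `I`: the common value of the lower and upper integrals of
an integrable function. -/
noncomputable def Int1 (S : IntegralSystem X) (f : X → ℝ) : ℝ :=
  (upperInt S (fun x => ((f x : EReal)))).toReal

/-!
Call a sequence in `L` increasing to `f` an approximation of `f ∈ L_↑`. If `h ∈ L` lies below the
limit of an approximation `(gₙ)`, then `h - h ∧ gₙ` decreases to `0`, so continuity of `I` gives
`I h = lim I (h ∧ gₙ) ≤ sup I gₙ`; hence `I_↑ f` can be computed along any approximation.
If `(g n k)ₖ` is a nonnegative approximation of `f n`, the diagonal sums `∑ n < k, g n k`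
approximate `∑ n, f n`; hence `I_↑` is countably additive on nonnegative functions. The upper
integral inherits subadditivity by dominating each `fₙ` by some `gₙ ∈ L_↑` with
`I_↑ gₙ ≤ Ī fₙ + εₙ`, where `∑ εₙ` is arbitrarily small.
-/

theorem monotone_sum_diagonal {M : Type*} [AddCommMonoid M] [PartialOrder M]
    [IsOrderedAddMonoid M] {G : ℕ → ℕ → M} (hG : ∀ n, Monotone (G n)) (hG0 : ∀ n k, 0 ≤ G n k) :
    Monotone fun k => ∑ n ∈ Finset.range k, G n k :=
  fun j k hjk =>
    calc ∑ n ∈ Finset.range j, G n j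
        ≤ ∑ n ∈ Finset.range j, G n k := Finset.sum_le_sum fun n _ => hG n hjk
      _ ≤ ∑ n ∈ Finset.range k, G n k :=
        Finset.sum_le_sum_of_subset_of_nonneg (Finset.range_mono hjk) fun n _ _ => hG0 n k

theorem ereal_coe_sum {ι : Type*} (s : Finset ι) (a : ι → ℝ) :
    ((∑ i ∈ s, a i : ℝ) : EReal) = ∑ i ∈ s, (a i : EReal) :=
  map_sum (⟨⟨Real.toEReal, EReal.coe_zero⟩, EReal.coe_add⟩ : ℝ →+ EReal) a s

theorem ereal_tendsto_sum {ι κ : Type*} {s : Finset ι} {l : Filter κ} {a : ι → κ → EReal}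
    {b : ι → EReal} (hb : ∀ i ∈ s, b i ≠ ⊥) (h : ∀ i ∈ s, Tendsto (a i) l (𝓝 (b i))) :
    Tendsto (fun k => ∑ i ∈ s, a i k) l (𝓝 (∑ i ∈ s, b i)) := by
  induction s using Finset.cons_induction with
  | empty => simpa using tendsto_const_nhds
  | cons j s hj ih =>
    rw [Finset.forall_mem_cons] at hb h
    have hs : ∑ i ∈ s, b i ≠ ⊥ :=
      Finset.sum_induction b (· ≠ ⊥) (fun _ _ hx hy => EReal.add_ne_bot_iff.2 ⟨hx, hy⟩)
        EReal.zero_ne_bot hb.2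
    simp only [Finset.sum_cons]
    exact (EReal.continuousAt_add (p := (b j, ∑ i ∈ s, b i)) (.inr hs) (.inl hb.1)).tendsto.comp
      (h.1.prodMk_nhds (ih hb.2 h.2))

theorem ereal_iSup_sum_diagonal {a : ℕ → ℕ → EReal} (ha : ∀ n k, 0 ≤ a n k)
    (hmono : ∀ n, Monotone (a n)) :
    ⨆ k, ∑ n ∈ Finset.range k, a n k = ⨆ N, ∑ n ∈ Finset.range N, ⨆ k, a n k := by
  refine le_antisymm (iSup_mono fun k => Finset.sum_le_sum fun n _ => le_iSup (a n) k)
    (iSup_le fun N => ?_)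
  have hlim : Tendsto (fun k => ∑ n ∈ Finset.range N, a n k) atTop
      (𝓝 (∑ n ∈ Finset.range N, ⨆ k, a n k)) :=
    ereal_tendsto_sum
      (fun n _ => ne_bot_of_le_ne_bot EReal.zero_ne_bot ((ha n 0).trans (le_iSup (a n) 0)))
      fun n _ => tendsto_atTop_iSup (hmono n)
  refine le_of_tendsto hlim ((eventually_ge_atTop N).mono fun k hNk => ?_)
  calc ∑ n ∈ Finset.range N, a n k
      ≤ ∑ n ∈ Finset.range k, a n k :=
        Finset.sum_le_sum_of_subset_of_nonneg (Finset.range_mono hNk) fun n _ _ => ha n k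
    _ ≤ ⨆ k, ∑ n ∈ Finset.range k, a n k := le_iSup (fun k => ∑ n ∈ Finset.range k, a n k) k

theorem ereal_le_iSup_sum_of_forall_lt {a : ℕ → EReal} (ha : ∀ n, 0 ≤ a n) {c : EReal}
    (h : ∀ b : ℕ → EReal, (∀ n, a n < b n) → c ≤ ⨆ N, ∑ n ∈ Finset.range N, b n) :
    c ≤ ⨆ N, ∑ n ∈ Finset.range N, a n := by
  generalize hA : ⨆ N, ∑ n ∈ Finset.range N, a n = A
  have sum_le (N : ℕ) : ∑ n ∈ Finset.range N, a n ≤ A :=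
    hA ▸ le_iSup (fun N => ∑ n ∈ Finset.range N, a n) N
  have le_A (n : ℕ) : a n ≤ A :=
    (Finset.single_le_sum (fun i _ => ha i) (Finset.self_mem_range_succ n)).trans (sum_le (n + 1))
  refine EReal.le_of_forall_lt_iff_le.1 fun z hz => ?_
  have A_ne_top : A ≠ ⊤ := ne_top_of_lt hz
  lift A to ℝ using ⟨A_ne_top, ne_bot_of_le_ne_bot EReal.zero_ne_bot ((ha 0).trans (le_A 0))⟩
  obtain ⟨δ, hδ, d, hd, hdz⟩ := posSumOfEncodable (sub_pos.2 (EReal.coe_lt_coe_iff.1 hz)) ℕ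
  have lt_add (n : ℕ) : a n < a n + δ n := by
    simpa [add_comm] using EReal.add_lt_add_of_lt_of_le (EReal.coe_pos.2 (hδ n)) (le_refl (a n))
      (ne_bot_of_le_ne_bot EReal.zero_ne_bot (ha n)) (ne_top_of_le_ne_top A_ne_top (le_A n))
  refine (h (fun n => a n + δ n) lt_add).trans (iSup_le fun N => ?_)
  have hδN : ∑ n ∈ Finset.range N, δ n ≤ z - A :=
    (sum_le_hasSum _ (fun n _ => (hδ n).le) hd).trans hdz
  calc ∑ n ∈ Finset.range N, (a n + δ n)
      = ∑ n ∈ Finset.range N, a n + (∑ n ∈ Finset.range N, δ n : ℝ) := by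
        rw [Finset.sum_add_distrib, ereal_coe_sum]
    _ ≤ A + (z - A : ℝ) := add_le_add (sum_le N) (EReal.coe_le_coe_iff.2 hδN)
    _ = z := by rw [← EReal.coe_add, add_sub_cancel]

namespace IntegralSystem

variable {S : IntegralSystem X}

theorem sub_mem {f g : X → ℝ} (hf : f ∈ S.L) (hg : g ∈ S.L) : f - g ∈ S.L := by
  simpa [sub_eq_add_neg] using S.add_mem hf (S.smul_mem (-1) hg)

theorem I_sub {f g : X → ℝ} (hf : f ∈ S.L) (hg : g ∈ S.L) : S.I (f - g) = S.I f - S.I g := by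
  rw [eq_sub_iff_add_eq, ← S.I_add (sub_mem hf hg) hg, sub_add_cancel]

theorem I_mono {f g : X → ℝ} (hf : f ∈ S.L) (hg : g ∈ S.L) (hfg : f ≤ g) : S.I f ≤ S.I g := by
  rw [← sub_nonneg, ← I_sub hg hf]
  exact S.I_pos (sub_mem hg hf) fun x => sub_nonneg.2 (hfg x)

theorem sum_mem {ι : Type*} {s : Finset ι} {f : ι → X → ℝ} (hf : ∀ i ∈ s, f i ∈ S.L) :
    ∑ i ∈ s, f i ∈ S.L :=
  Finset.sum_induction f (· ∈ S.L) (fun _ _ hg hh => S.add_mem hg hh) S.zero_mem hf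

theorem I_zero : S.I 0 = 0 := by
  simpa using S.I_smul 0 S.zero_mem

theorem I_sum {ι : Type*} {s : Finset ι} {f : ι → X → ℝ} (hf : ∀ i ∈ s, f i ∈ S.L) :
    S.I (∑ i ∈ s, f i) = ∑ i ∈ s, S.I (f i) := by
  induction s using Finset.cons_induction with
  | empty => simp [I_zero]
  | cons j s hj ih =>
    rw [Finset.forall_mem_cons] at hf
    rw [Finset.sum_cons, Finset.sum_cons, S.I_add hf.1 (sum_mem hf.2), ih hf.2]

theorem tendsto_I_of_monotone {u : ℕ → X → ℝ} {h : X → ℝ} (hu : ∀ n, u n ∈ S.L) (hh : h ∈ S.L)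
    (hmono : Monotone u) (hlim : ∀ x, Tendsto (fun n => u n x) atTop (𝓝 (h x))) :
    Tendsto (fun n => S.I (u n)) atTop (𝓝 (S.I h)) := by
  have hle (n : ℕ) (x : X) : u n x ≤ h x :=
    Monotone.ge_of_tendsto (fun _ _ hmn => hmono hmn x) (hlim x) n
  have hdiff : Tendsto (fun n => S.I (h - u n)) atTop (𝓝 0) :=
    S.I_cont (fun n => h - u n) (fun n => sub_mem hh (hu n)) (fun n x => sub_nonneg.2 (hle n x))
      (fun n x => sub_le_sub_left (hmono n.le_succ x) (h x))
      fun x => by simpa using (hlim x).const_sub (h x)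
  simpa [I_sub hh (hu _)] using hdiff.const_sub (S.I h)

/-- `g` is an approximation of `f ∈ L_↑`: a sequence in `L` increasing pointwise to `f`. The
conditions are those of `MemLup`, with the sequence exposed so that it can be manipulated. -/
structure IncreasesTo (S : IntegralSystem X) (g : ℕ → X → ℝ) (f : X → EReal) : Prop where
  mem : ∀ n, g n ∈ S.L
  mono : Monotone g
  tendsto : ∀ x, Tendsto (fun n => (g n x : EReal)) atTop (𝓝 (f x))

theorem memLup_iff {f : X → EReal} : MemLup S f ↔ ∃ g, S.IncreasesTo g f :=
  ⟨fun ⟨g, hg, hmono, hlim⟩ => ⟨g, hg, monotone_nat_of_le_succ hmono, hlim⟩,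
    fun ⟨g, hg⟩ => ⟨g, hg.mem, fun n => hg.mono n.le_succ, hg.tendsto⟩⟩

namespace IncreasesTo

variable {g g' : ℕ → X → ℝ} {f f' : X → EReal}

theorem monotone_coe_apply (hg : S.IncreasesTo g f) (x : X) :
    Monotone fun n => (g n x : EReal) :=
  fun _ _ hmn => EReal.coe_le_coe_iff.2 (hg.mono hmn x)

theorem iSup_apply (hg : S.IncreasesTo g f) (x : X) : ⨆ n, (g n x : EReal) = f x :=
  iSup_eq_of_tendsto (hg.monotone_coe_apply x) (hg.tendsto x)

theorem apply_le (hg : S.IncreasesTo g f) (n : ℕ) (x : X) : (g n x : EReal) ≤ f x :=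
  (hg.monotone_coe_apply x).ge_of_tendsto (hg.tendsto x) n

theorem monotone_coe_I (hg : S.IncreasesTo g f) : Monotone fun n => (S.I (g n) : EReal) :=
  fun m n hmn => EReal.coe_le_coe_iff.2 (I_mono (hg.mem m) (hg.mem n) (hg.mono hmn))

theorem const {h : X → ℝ} (hh : h ∈ S.L) : S.IncreasesTo (fun _ => h) (fun x => h x) :=
  ⟨fun _ => hh, monotone_const, fun _ => tendsto_const_nhds⟩

theorem sup (hg : S.IncreasesTo g f) (hg' : S.IncreasesTo g' f') :
    S.IncreasesTo (g ⊔ g') (f ⊔ f') where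
  mem n := S.sup_mem (hg.mem n) (hg'.mem n)
  mono := hg.mono.sup hg'.mono
  tendsto x := by
    simpa [EReal.coe_strictMono.monotone.map_max] using (hg.tendsto x).max (hg'.tendsto x)

theorem coe_I_le_iSup (hg : S.IncreasesTo g f) {h : X → ℝ} (hh : h ∈ S.L)
    (hhf : ∀ x, (h x : EReal) ≤ f x) : (S.I h : EReal) ≤ ⨆ n, (S.I (g n) : EReal) := by
  have mem_inf (n : ℕ) : h ⊓ g n ∈ S.L := S.inf_mem hh (hg.mem n)
  have tendsto_inf (x : X) : Tendsto (fun n => (h ⊓ g n) x) atTop (𝓝 (h x)) := by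
    rw [← EReal.tendsto_coe]
    simpa [EReal.coe_strictMono.monotone.map_min, hhf x] using
      (tendsto_const_nhds (x := (h x : EReal))).min (hg.tendsto x)
  have tendsto_I : Tendsto (fun n => (S.I (h ⊓ g n) : EReal)) atTop (𝓝 (S.I h)) :=
    EReal.tendsto_coe.2
      (tendsto_I_of_monotone mem_inf hh (monotone_const.inf hg.mono) tendsto_inf)
  refine le_of_tendsto' tendsto_I fun n => ?_
  calc (S.I (h ⊓ g n) : EReal)
      ≤ S.I (g n) := EReal.coe_le_coe_iff.2 (I_mono (mem_inf n) (hg.mem n) inf_le_right)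
    _ ≤ ⨆ n, (S.I (g n) : EReal) := le_iSup (fun n => (S.I (g n) : EReal)) n

theorem Iup_eq_iSup (hg : S.IncreasesTo g f) : Iup S f = ⨆ n, (S.I (g n) : EReal) := by
  refine le_antisymm (sSup_le ?_) (le_sSup ⟨g, hg.mem, fun n => hg.mono n.le_succ, hg.tendsto,
    tendsto_atTop_iSup hg.monotone_coe_I⟩)
  rintro c ⟨k, hk, hkmono, hklim, hc⟩
  have hkf : S.IncreasesTo k f := ⟨hk, monotone_nat_of_le_succ hkmono, hklim⟩
  exact le_of_tendsto' hc fun n => hg.coe_I_le_iSup (hk n) (hkf.apply_le n)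

theorem sum_diagonal {G : ℕ → ℕ → X → ℝ} {F : ℕ → X → EReal}
    (hG : ∀ n, S.IncreasesTo (G n) (F n)) (hG0 : ∀ n k, 0 ≤ G n k) :
    S.IncreasesTo (fun k => ∑ n ∈ Finset.range k, G n k)
      (fun x => ⨆ N, ∑ n ∈ Finset.range N, F n x) where
  mem k := sum_mem fun n _ => (hG n).mem k
  mono := monotone_sum_diagonal (fun n => (hG n).mono) hG0
  tendsto x := by
    have hiSup : ⨆ k, ((∑ n ∈ Finset.range k, G n k) x : EReal) =
        ⨆ N, ∑ n ∈ Finset.range N, F n x := by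
      simp only [Finset.sum_apply, ereal_coe_sum, ← (hG _).iSup_apply]
      exact ereal_iSup_sum_diagonal (fun n k => EReal.coe_nonneg.2 (hG0 n k x))
        fun n => (hG n).monotone_coe_apply x
    rw [← hiSup]
    exact tendsto_atTop_iSup fun _ _ hjk => EReal.coe_le_coe_iff.2
      (monotone_sum_diagonal (fun n => (hG n).mono) hG0 hjk x)

end IncreasesTo

end IntegralSystem

section

open IntegralSystem

variable {S : IntegralSystem X}

theorem MemLup.exists_increasesTo_nonneg {f : X → EReal} (hf : MemLup S f) (hf0 : ∀ x, 0 ≤ f x) :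
    ∃ g, S.IncreasesTo g f ∧ ∀ n, 0 ≤ g n := by
  obtain ⟨g, hg⟩ := memLup_iff.1 hf
  have hsup : f ⊔ (fun x => ((0 : X → ℝ) x : EReal)) = f := sup_eq_left.2 hf0
  exact ⟨_, hsup ▸ hg.sup (.const S.zero_mem), fun n => le_sup_right⟩

theorem MemLup.Iup_nonneg {f : X → EReal} (hf : MemLup S f) (hf0 : ∀ x, 0 ≤ f x) :
    0 ≤ Iup S f := by
  obtain ⟨g, hg, hg0⟩ := hf.exists_increasesTo_nonneg hf0
  rw [hg.Iup_eq_iSup]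
  exact le_iSup_of_le 0 (EReal.coe_nonneg.2 (S.I_pos (hg.mem 0) (hg0 0)))

theorem MemLup.iSup_sum {f : ℕ → X → EReal} (hf : ∀ n, MemLup S (f n)) (hf0 : ∀ n x, 0 ≤ f n x) :
    MemLup S fun x => ⨆ N, ∑ n ∈ Finset.range N, f n x := by
  choose G hG hG0 using fun n => (hf n).exists_increasesTo_nonneg (hf0 n)
  exact memLup_iff.2 ⟨_, .sum_diagonal hG hG0⟩

theorem Iup_iSup_sum {f : ℕ → X → EReal} (hf : ∀ n, MemLup S (f n)) (hf0 : ∀ n x, 0 ≤ f n x) :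
    Iup S (fun x => ⨆ N, ∑ n ∈ Finset.range N, f n x) =
      ⨆ N, ∑ n ∈ Finset.range N, Iup S (f n) := by
  choose G hG hG0 using fun n => (hf n).exists_increasesTo_nonneg (hf0 n)
  simp only [(IncreasesTo.sum_diagonal hG hG0).Iup_eq_iSup, (hG _).Iup_eq_iSup,
    I_sum fun n _ => (hG n).mem _, ereal_coe_sum]
  exact ereal_iSup_sum_diagonal
    (fun n k => EReal.coe_nonneg.2 (S.I_pos ((hG n).mem k) (hG0 n k)))
    fun n => (hG n).monotone_coe_I

theorem upperInt_le_Iup {f g : X → EReal} (hg : MemLup S g) (hfg : ∀ x, f x ≤ g x) :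
    upperInt S f ≤ Iup S g :=
  sInf_le ⟨g, ⟨hg, hfg⟩, rfl⟩

theorem upperInt_lt_iff {f : X → EReal} {b : EReal} :
    upperInt S f < b ↔ ∃ g, MemLup S g ∧ (∀ x, f x ≤ g x) ∧ Iup S g < b := by
  simp [upperInt, sInf_lt_iff, and_assoc]

theorem upperInt_nonneg {f : X → EReal} (hf0 : ∀ x, 0 ≤ f x) : 0 ≤ upperInt S f := by
  refine le_sInf ?_
  rintro _ ⟨g, ⟨hg, hfg⟩, rfl⟩
  exact hg.Iup_nonneg fun x => (hf0 x).trans (hfg x)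

end

/-- Subadditivity of the upper integral: if `f : X → [0,∞]` is the pointwise sum of the
series of nonnegative functions `fn n : X → [0,∞]`, then `Ī f ≤ Σ_n Ī (fn n)` (sums of
nonnegative series taken in `[0,∞]` as suprema of partial sums). -/
theorem upperInt_subadditive (S : IntegralSystem X) (f : X → EReal) (fn : ℕ → X → EReal)
    (hpos : ∀ n x, 0 ≤ fn n x)
    (hsum : ∀ x, f x = ⨆ N : ℕ, ∑ n ∈ Finset.range N, fn n x) :
    upperInt S f ≤ ⨆ N : ℕ, ∑ n ∈ Finset.range N, upperInt S (fn n) := by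
  refine ereal_le_iSup_sum_of_forall_lt (fun n => upperInt_nonneg (hpos n)) fun b hb => ?_
  choose g hg hfg hgb using fun n => upperInt_lt_iff.1 (hb n)
  have hg0 (n : ℕ) (x : X) : 0 ≤ g n x := (hpos n x).trans (hfg n x)
  have hf_le (x : X) : f x ≤ ⨆ N, ∑ n ∈ Finset.range N, g n x := by
    rw [hsum x]
    exact iSup_mono fun N => Finset.sum_le_sum fun n _ => hfg n x
  calc upperInt S f
      ≤ Iup S (fun x => ⨆ N, ∑ n ∈ Finset.range N, g n x) :=
        upperInt_le_Iup (.iSup_sum hg hg0) hf_le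
    _ = ⨆ N, ∑ n ∈ Finset.range N, Iup S (g n) := Iup_iSup_sum hg hg0
    _ ≤ ⨆ N, ∑ n ∈ Finset.range N, b n :=
        iSup_mono fun N => Finset.sum_le_sum fun n _ => (hgb n).le
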